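/- arXiv:2108.04870 — 2 statements merged into one kernel-verified Lean document; each statement's English description precedes it below -/
import Mathlib

section
/- Let p be an odd prime. For every integer k ≥ 0 there exists an assignment of integers a : (ℤ/pℤ)² → ℤ such that p^(p+3+k) exactly divides the group determinant D_G((a_g)) of G = (ℤ/pℤ)² (i.e., p^(p+3+k) divides it but p^(p+4+k) does not). -/
/-- The group determinant of a finite additive group `G` with integer
coefficients `a`: the determinant of the matrix whose `(g,h)` entry is
`a (g - h)`. -/
def addGroupDet {G : Type*} [AddGroup G] [Fintype G] [DecidableEq G] (a : G → ℤ) : ℤ :=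
  Matrix.det (Matrix.of fun g h : G => a (g - h))

open Finset in
lemma aux_binom {R : Type*} [CommRing R] (p : ℕ) (hp : p.Prime) (h3 : 3 ≤ p) (u : R) :
    ∃ r : R, (1 + u) ^ p = 1 + p * u + p * u ^ 2 * r + u ^ p := by
  obtain ⟨n, rfl⟩ : ∃ n, p = n + 3 := ⟨p - 3, by omega⟩
  have hd : ∀ m ∈ range (n + 1), ((n + 3 : ℕ) : R) * u ^ 2 ∣ u ^ (m + 2) * ((n + 3).choose (m + 2) : R) := by
    intro m hm
    have hm' := mem_range.1 hm
    obtain ⟨c, hc⟩ := hp.dvd_choose_self (k := m + 2) (by omega) (by omega)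
    refine ⟨u ^ m * c, ?_⟩
    rw [hc]; push_cast; ring
  obtain ⟨r, hr⟩ := dvd_sum hd
  refine ⟨r, ?_⟩
  rw [← hr, add_comm 1 u, add_pow]
  simp only [one_pow, mul_one]
  rw [sum_range_succ, sum_range_succ', sum_range_succ']
  simp
  ring

lemma aux_pow {R : Type*} [CommRing R] (p : ℕ) (hp : p.Prime) (h3 : 3 ≤ p) (u q z : R)
    (hq : q ∣ u) (hz : u ^ (p - 1) = p * (q * z)) :
    ∃ w : R, (1 + u) ^ p - 1 = p * u * (1 + q * w) := by
  obtain ⟨r, hr⟩ := aux_binom p hp h3 u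
  obtain ⟨v, hv⟩ := hq
  refine ⟨v * r + z, ?_⟩
  have : u ^ p = u * (p * (q * z)) := by
    rw [← hz, ← pow_succ']; congr 1; omega
  rw [hr, this]
  have e : p * u ^ 2 * r = p * u * (q * (v * r)) := by
    conv_rhs => rw [← mul_assoc q, ← hv]
    ring
  rw [e]; ring

lemma aux_descent {K : Type*} [Field K] [NumberField K] (a b : ℤ)
    (h : ((a : ℤ) : NumberField.RingOfIntegers K) ∣ (b : NumberField.RingOfIntegers K)) : a ∣ b := by
  by_cases ha : a = 0
  · subst ha
    simpa using h
  obtain ⟨c, hc⟩ := h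
  have hc' : (b : K) = a * (c : K) := by
    have := congrArg (algebraMap (NumberField.RingOfIntegers K) K) hc
    simpa using this
  have haK : (a : K) ≠ 0 := by exact_mod_cast ha
  have hcK : (c : K) = algebraMap ℚ K ((b : ℚ) / a) := by
    simp only [map_div₀, map_intCast]
    rw [hc']; field_simp
  have hi : IsIntegral ℤ ((b : ℚ) / a) := by
    have : IsIntegral ℤ (c : K) := c.isIntegral_coe
    rw [hcK] at this
    exact (isIntegral_algebraMap_iff (algebraMap ℚ K).injective).1 this
  obtain ⟨m, hm⟩ := IsIntegrallyClosed.isIntegral_iff.1 hi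
  refine ⟨m, ?_⟩
  have haQ : (a : ℚ) ≠ 0 := by exact_mod_cast ha
  have : (b : ℚ) = a * m := by
    have hm' : (m : ℚ) = b / a := by simpa using hm
    rw [hm']; field_simp
  exact_mod_cast this

section chars
variable {R : Type*} [CommRing R] [IsDomain R] [CharZero R] {p : ℕ} [Fact p.Prime]

lemma aux_sum_two {M : Type*} [AddCommMonoid M] (f : ZMod p → ZMod p → M) :
    ∑ m : Fin 2 → ZMod p, f (m 0) (m 1) = ∑ x, ∑ y, f x y := by
  rw [← Fintype.sum_prod_type' f]
  exact Fintype.sum_equiv (finTwoArrowEquiv (ZMod p)) _ _ (fun m => by simp [finTwoArrowEquiv])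

lemma aux_prod_two {M : Type*} [CommMonoid M] (f : ZMod p → ZMod p → M) :
    ∏ m : Fin 2 → ZMod p, f (m 0) (m 1) = ∏ x, ∏ y, f x y := by
  rw [← Fintype.prod_prod_type' f]
  exact Fintype.prod_equiv (finTwoArrowEquiv (ZMod p)) _ _ (fun m => by simp [finTwoArrowEquiv])

lemma aux_diag (ψ : AddChar (ZMod p) R) (hψ : ψ.IsPrimitive) (a : (Fin 2 → ZMod p) → ℤ) :
    ((addGroupDet a : ℤ) : R) =
      ∏ i : Fin 2 → ZMod p, ∑ m : Fin 2 → ZMod p, (a m : R) * ψ (i 0 * m 0 + i 1 * m 1) := by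
  classical
  set l : (Fin 2 → ZMod p) → R := fun i => ∑ m : Fin 2 → ZMod p, (a m : R) * ψ (i 0 * m 0 + i 1 * m 1)
    with hl
  let M : Matrix (Fin 2 → ZMod p) (Fin 2 → ZMod p) R := Matrix.of fun g h => (a (g - h) : R)
  let V : Matrix (Fin 2 → ZMod p) (Fin 2 → ZMod p) R :=
    Matrix.of fun h i => ψ (-(i 0 * h 0 + i 1 * h 1))
  let W : Matrix (Fin 2 → ZMod p) (Fin 2 → ZMod p) R :=
    Matrix.of fun i h => ψ (i 0 * h 0 + i 1 * h 1)
  have hM : ((addGroupDet a : ℤ) : R) = M.det := by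
    unfold addGroupDet
    rw [← eq_intCast (Int.castRingHom R), RingHom.map_det]
    rfl
  have hMV : M * V = V * Matrix.diagonal l := by
    ext g i
    rw [Matrix.mul_diagonal, Matrix.mul_apply]
    simp only [M, V, Matrix.of_apply, hl, Finset.mul_sum]
    refine Fintype.sum_equiv (Equiv.subLeft g) _ _ (fun h => ?_)
    simp only [Equiv.subLeft_apply]
    rw [mul_left_comm, ← AddChar.map_add_eq_mul]
    congr 2
    simp only [Pi.sub_apply]; ring
  have hVW : V * W = Matrix.diagonal fun _ => ((p : R) ^ 2) := by
    ext g h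
    rw [Matrix.mul_apply]
    simp only [V, W, Matrix.of_apply]
    have e : ∀ i : Fin 2 → ZMod p, ψ (-(i 0 * g 0 + i 1 * g 1)) * ψ (i 0 * h 0 + i 1 * h 1)
        = ψ (i 0 * (h 0 - g 0)) * ψ (i 1 * (h 1 - g 1)) := by
      intro i
      rw [← AddChar.map_add_eq_mul, ← AddChar.map_add_eq_mul]
      congr 1; ring
    simp only [e]
    rw [aux_sum_two (fun x y => ψ (x * (h 0 - g 0)) * ψ (y * (h 1 - g 1)))]
    rw [← Finset.sum_mul_sum, AddChar.sum_mulShift _ hψ, AddChar.sum_mulShift _ hψ, ZMod.card,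
      Matrix.diagonal_apply]
    by_cases hgh : g = h
    · subst hgh; simp [sq]
    · rw [if_neg hgh]
      have : h 0 - g 0 ≠ 0 ∨ h 1 - g 1 ≠ 0 := by
        by_contra hcon
        push Not at hcon
        apply hgh
        ext t
        fin_cases t
        · exact (sub_eq_zero.1 hcon.1).symm
        · exact (sub_eq_zero.1 hcon.2).symm
      rcases this with h' | h' <;> simp [h']
  have hV : V.det ≠ 0 := by
    intro h0
    have := congrArg Matrix.det hVW
    rw [Matrix.det_mul, h0, zero_mul, Matrix.det_diagonal] at this
    have hp0 : (p : R) ≠ 0 := by exact_mod_cast (Fact.out : p.Prime).ne_zero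
    exact (Finset.prod_ne_zero_iff.2 (fun _ _ => pow_ne_zero 2 hp0)) this.symm
  have := congrArg Matrix.det hMV
  rw [Matrix.det_mul, Matrix.det_mul, Matrix.det_diagonal, mul_comm] at this
  rw [hM]
  exact mul_left_cancel₀ hV this


lemma aux_reindex {M : Type*} [CommMonoid M] (f : ℕ → M) :
    ∏ j : ZMod p, f j.val = ∏ i ∈ Finset.range p, f i := by
  have hp : p ≠ 0 := (Fact.out : p.Prime).ne_zero
  cases p with
  | zero => exact absurd rfl hp
  | succ n => exact (Finset.prod_range f).symm

lemma aux_prod_sub {w : R} (hw : IsPrimitiveRoot w p) (C : R) :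
    ∏ i : ZMod p, (C - w ^ i.val) = C ^ p - 1 := by
  rw [aux_reindex (fun i => C - w ^ i)]
  have := X_pow_sub_C_eq_prod hw (Fact.out : p.Prime).pos (one_pow p)
  have := congrArg (Polynomial.eval C) this
  simp [Polynomial.eval_prod] at this
  exact this.symm

lemma aux_prod_one_sub {w : R} (hw : IsPrimitiveRoot w p) :
    ∏ j ∈ (Finset.univ : Finset (ZMod p)).erase 0, (1 - w ^ j.val) = p := by
  have h1 : ∏ j ∈ (Finset.univ : Finset (ZMod p)).erase 0, (1 - w ^ j.val)
      = ∏ j : ZMod p, (if j.val = 0 then 1 else (1 - w ^ j.val)) := by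
    rw [← Finset.mul_prod_erase _ _ (Finset.mem_univ (0 : ZMod p))]
    simp only [ZMod.val_zero, if_true, one_mul]
    refine Finset.prod_congr rfl fun j hj => ?_
    rw [if_neg]
    simpa using hj
  rw [h1, aux_reindex (fun i => if i = 0 then 1 else (1 - w ^ i))]
  obtain ⟨n, hn⟩ : ∃ n, p = n + 1 := ⟨p - 1, by have := (Fact.out : p.Prime).pos; omega⟩
  have hw' : IsPrimitiveRoot w (n + 1) := hn ▸ hw
  have := hw'.prod_one_sub_pow_eq_order
  rw [hn, Finset.prod_range_succ']
  simpa using this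

lemma aux_prod_cong {ι : Type*} (s : Finset ι) (q : R) (f : ι → R) :
    ∃ w, ∏ j ∈ s, (1 + q * f j) = 1 + q * w := by
  classical
  induction s using Finset.induction_on with
  | empty => exact ⟨0, by simp⟩
  | insert a s ha ih =>
    obtain ⟨w, hw⟩ := ih
    refine ⟨f a + w + q * f a * w, ?_⟩
    rw [Finset.prod_insert ha, hw]; ring

/-- The coefficients of `2 - 2 y + y ^ 2 + p ^ k (1 + y + ⋯ + y ^ (p - 1)) - x`. -/
def auxCoeff (p k : ℕ) (m : Fin 2 → ZMod p) : ℤ :=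
  (if m 0 = 0 then (p : ℤ) ^ k + (if m 1 = 0 then 2 else 0) - (if m 1 = 1 then 2 else 0)
    + (if m 1 = 2 then 1 else 0) else 0) - (if m 0 = 1 then (if m 1 = 0 then 1 else 0) else 0)

lemma aux_eig (ψ : AddChar (ZMod p) R) (hψ : ψ.IsPrimitive) (k : ℕ) (i : Fin 2 → ZMod p) :
    ∑ m : Fin 2 → ZMod p, (auxCoeff p k m : R) * ψ (i 0 * m 0 + i 1 * m 1)
      = (if i 1 = 0 then 1 + (p : R) ^ (k + 1) else 1 + (1 - ψ (i 1)) ^ 2) - ψ (i 0) := by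
  classical
  have h2 : ψ (i 1 * 2) = ψ (i 1) ^ 2 := by
    rw [mul_two, AddChar.map_add_eq_mul, sq]
  have h3 : ∑ y, ψ (i 1 * y) = if i 1 = 0 then (p : R) else 0 := by
    have := AddChar.sum_mulShift (i 1) hψ
    rw [ZMod.card] at this
    rw [Nat.cast_ite, Nat.cast_zero] at this
    rw [← this]
    simp only [mul_comm]
  unfold auxCoeff
  rw [aux_sum_two (fun x y => (((if x = 0 then (p : ℤ) ^ k + (if y = 0 then 2 else 0)
    - (if y = 1 then 2 else 0) + (if y = 2 then 1 else 0) else 0)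
    - (if x = 1 then (if y = 0 then 1 else 0) else 0) : ℤ) : R) * ψ (i 0 * x + i 1 * y))]
  rw [Finset.sum_comm]
  push_cast
  simp only [sub_mul, add_mul, ite_mul, zero_mul, Finset.sum_sub_distrib, Finset.sum_add_distrib,
    Finset.sum_ite_eq', Finset.mem_univ, if_true, mul_zero, zero_add, add_zero, mul_one,
    AddChar.map_zero_eq_one, h2, one_mul, ← Finset.mul_sum, h3]
  split_ifs with h
  · rw [h]; simp; ring
  · ring

lemma aux_main (hodd : Odd p) {w : R} (hw : IsPrimitiveRoot w p) (k : ℕ) :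
    ∃ z : R, ((addGroupDet (auxCoeff p k) : ℤ) : R) = (p : R) ^ (p + 3 + k) * (1 + (1 - w) * z) := by
  classical
  have hp : p.Prime := Fact.out
  have h3 : 3 ≤ p := by
    have := hp.two_le
    obtain ⟨m, hm⟩ := hodd
    omega
  have hψ := AddChar.zmodChar_primitive_of_primitive_root p hw
  set ψ := AddChar.zmodChar p ((IsPrimitiveRoot.iff_def w p).mp hw).left with hψd
  have hψv : ∀ j, ψ j = w ^ j.val := fun j => rfl
  rw [aux_diag ψ hψ]
  simp only [aux_eig ψ hψ]
  rw [aux_prod_two (fun x y => (if y = 0 then 1 + (p : R) ^ (k + 1) else 1 + (1 - ψ y) ^ 2) - ψ x),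
    Finset.prod_comm]
  simp only [hψv, aux_prod_sub hw]
  rw [← Finset.mul_prod_erase _ _ (Finset.mem_univ (0 : ZMod p)), if_pos rfl]
  have hprod := aux_prod_one_sub hw
  have hπd : ∀ j : ZMod p, (1 - w) ∣ (1 - w ^ j.val) := fun j => by
    simpa using sub_dvd_pow_sub_pow 1 w j.val
  have hπp : (1 - w) ∣ (p : R) := by
    rw [← hprod]
    exact (hπd 1).trans (Finset.dvd_prod_of_mem (fun j : ZMod p => 1 - w ^ j.val) (by simp))
  have hpπ : ∀ j : ZMod p, j ≠ 0 → (p : R) ∣ (1 - w ^ j.val) ^ (p - 1) := by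
    intro j hj
    obtain ⟨r, hr⟩ := exists_add_pow_prime_eq hp (w ^ j.val - 1) 1
    have hne : w ^ j.val - 1 ≠ 0 := by
      rw [sub_ne_zero]
      exact hw.pow_ne_one_of_pos_of_lt (by simpa using hj) (ZMod.val_lt j)
    have h1 : (w ^ j.val - 1 + 1) ^ p = 1 := by
      rw [sub_add_cancel, ← pow_mul, mul_comm, pow_mul, hw.pow_eq_one, one_pow]
    have hpp : (w ^ j.val - 1) ^ p = (w ^ j.val - 1) * (w ^ j.val - 1) ^ (p - 1) := by
      rw [← pow_succ']; congr 1; omega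
    rw [h1, hpp] at hr
    have h4 : (w ^ j.val - 1) ^ (p - 1) = p * (-r) := by
      apply mul_left_cancel₀ hne
      linear_combination -hr
    have hev : Even (p - 1) := Nat.Odd.sub_odd hodd odd_one
    rw [← hev.neg_pow, neg_sub, h4]
    exact dvd_mul_right _ _
  -- the trivial character
  obtain ⟨w0, hw0⟩ : ∃ w0, (1 + (p : R) ^ (k + 1)) ^ p - 1
      = p * (p : R) ^ (k + 1) * (1 + (1 - w) * w0) := by
    obtain ⟨c, hc⟩ := id hπp
    refine aux_pow p hp h3 _ _ (c * (p : R) ^ ((k + 1) * (p - 1) - 2))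
      (hπp.trans (dvd_pow_self _ (by omega))) ?_
    rw [← mul_assoc (1 - w), ← hc, ← pow_mul, ← pow_succ', ← pow_succ']
    congr 1
    have : 1 * 2 ≤ (k + 1) * (p - 1) := Nat.mul_le_mul (by omega) (by omega)
    omega
  have hj : ∀ j : ZMod p, ∃ wj, j ≠ 0 → (1 + (1 - w ^ j.val) ^ 2) ^ p - 1
      = p * (1 - w ^ j.val) ^ 2 * (1 + (1 - w) * wj) := by
    intro j
    by_cases hj : j = 0
    · exact ⟨0, fun h => absurd hj h⟩
    obtain ⟨c, hc⟩ := hpπ j hj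
    obtain ⟨d, hd⟩ := (hπd j).trans (dvd_pow_self (1 - w ^ j.val) (show p - 1 ≠ 0 by omega))
    obtain ⟨v, hv⟩ := aux_pow p hp h3 ((1 - w ^ j.val) ^ 2) (1 - w) (d * c)
      ((hπd j).trans (dvd_pow_self _ (by omega))) (by
        rw [← pow_mul, mul_comm 2, pow_mul, sq, ← mul_assoc (1 - w), ← hd]
        nth_rewrite 1 [hc]
        ring)
    exact ⟨v, fun _ => hv⟩
  choose f hf using hj
  have hprod2 : ∏ j ∈ (Finset.univ : Finset (ZMod p)).erase 0,
      ((if j = 0 then 1 + (p : R) ^ (k + 1) else 1 + (1 - w ^ j.val) ^ 2) ^ p - 1)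
      = ∏ j ∈ (Finset.univ : Finset (ZMod p)).erase 0,
        (p * (1 - w ^ j.val) ^ 2 * (1 + (1 - w) * f j)) := by
    refine Finset.prod_congr rfl fun j hj => ?_
    have hj0 : j ≠ 0 := Finset.ne_of_mem_erase hj
    rw [if_neg hj0, hf j hj0]
  obtain ⟨z, hz⟩ := aux_prod_cong ((Finset.univ : Finset (ZMod p)).erase 0) (1 - w) f
  rw [hprod2, Finset.prod_mul_distrib, Finset.prod_mul_distrib, Finset.prod_pow, hprod, hz, hw0,
    Finset.prod_const, Finset.card_erase_of_mem (Finset.mem_univ _), Finset.card_univ, ZMod.card]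
  refine ⟨w0 + z + (1 - w) * w0 * z, ?_⟩
  have e : (p : R) ^ (p + 3 + k) = p * (p : R) ^ (k + 1) * (p : R) ^ (p - 1) * p ^ 2 := by
    rw [← pow_succ', ← pow_add, ← pow_add]; congr 1; omega
  rw [e]; ring

end chars

/-- Let `p` be an odd prime.  For every `k ≥ 0` there is an assignment of
integers to the elements of `G = (ℤ/pℤ)²` whose group determinant is exactly
divisible by `p^(p+3+k)`. -/
theorem stmt1 (p : ℕ) [Fact p.Prime] (hodd : Odd p) (k : ℕ) :
    ∃ a : (Fin 2 → ZMod p) → ℤ,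
      (p : ℤ) ^ (p + 3 + k) ∣ addGroupDet a ∧
      ¬ (p : ℤ) ^ (p + 3 + k + 1) ∣ addGroupDet a := by
  have hp : p.Prime := Fact.out
  haveI : NeZero (p : ℚ) := ⟨by exact_mod_cast hp.ne_zero⟩
  haveI : IsCyclotomicExtension {p} ℚ (CyclotomicField p ℚ) := CyclotomicField.isCyclotomicExtension p ℚ
  have hζ := IsCyclotomicExtension.zeta_spec p ℚ (CyclotomicField p ℚ)
  have hw := hζ.toInteger_isPrimitiveRoot
  set w := hζ.toInteger
  obtain ⟨z, hz⟩ := aux_main hodd hw k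
  have hpR : (p : NumberField.RingOfIntegers (CyclotomicField p ℚ)) ≠ 0 := by exact_mod_cast hp.ne_zero
  refine ⟨auxCoeff p k, aux_descent (K := CyclotomicField p ℚ) _ _ ⟨_, by push_cast; exact hz⟩, fun hcon => ?_⟩
  obtain ⟨c, hc⟩ := hcon
  rw [hc] at hz
  push_cast at hz
  rw [pow_succ, mul_assoc] at hz
  have h1 := mul_left_cancel₀ (pow_ne_zero _ hpR) hz
  have hprod := aux_prod_one_sub hw
  have hdvd : (1 - w) ∣ (p : NumberField.RingOfIntegers (CyclotomicField p ℚ)) := by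
    rw [← hprod]
    have h11 : (1 : ZMod p).val = 1 := ZMod.val_one p
    have := Finset.dvd_prod_of_mem (fun j : ZMod p => 1 - w ^ j.val)
      (show (1 : ZMod p) ∈ (Finset.univ : Finset (ZMod p)).erase 0 by simp)
    simpa [h11] using this
  have hu : IsUnit (1 - w) := by
    apply isUnit_of_dvd_one
    have h2 : (1 : NumberField.RingOfIntegers (CyclotomicField p ℚ)) = p * c - (1 - w) * z := by
      linear_combination -h1
    have h6 := dvd_sub (hdvd.mul_right (c : NumberField.RingOfIntegers (CyclotomicField p ℚ))) (dvd_mul_right (1 - w) z)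
    rwa [← h2] at h6
  have hpu : (p : NumberField.RingOfIntegers (CyclotomicField p ℚ)) ∣ 1 := by
    obtain ⟨r, hr⟩ := exists_add_pow_prime_eq hp (w - 1) 1
    have hpp : (w - 1) ^ p = - (p * (w - 1) * r) := by
      rw [sub_add_cancel, hw.pow_eq_one] at hr
      linear_combination -hr
    have hu' : IsUnit ((w - 1) ^ p) := by
      rw [← neg_sub]; exact hu.neg.pow p
    rw [← isUnit_iff_dvd_one]
    refine isUnit_of_dvd_unit ?_ hu'
    rw [hpp]
    exact ⟨-((w - 1) * r), by ring⟩
  have := aux_descent (K := CyclotomicField p ℚ) (p : ℤ) 1 (by push_cast; exact hpu)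
  have h5 := Int.le_of_dvd one_pos this
  have := hp.two_le
  omega
end

section
/- Let p be an odd prime and let n < p. Suppose α_1, …, α_n are complex numbers such that the polynomial Π_{i=1}^n (1 + α_i x) = 1 + Σ_{i=1}^n e_i x^i has integer coefficients e_i = e_i(α_1,…,α_n) with p ∣ e_i for all i = 1,…,n. Then the polynomial Π_{i=1}^n (1 + α_i^p x) = 1 + Σ_{i=1}^n e_i(α_1^p,…,α_n^p) x^i also has integer coefficients, and p³ ∣ e_i(α_1^p,…,α_n^p) for all i = 1,…,n. -/
open Polynomial

/-- Logarithmic derivative of a product of linear factors. -/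
theorem aux_logder {ι : Type*} (s : Finset ι) (α : ι → ℂ) :
    PowerSeries.derivative ℂ ((∏ i ∈ s, (1 + C (α i) * X) : ℂ[X]) : PowerSeries ℂ)
      = ((∏ i ∈ s, (1 + C (α i) * X) : ℂ[X]) : PowerSeries ℂ) *
        PowerSeries.mk (fun m => -∑ i ∈ s, (-α i) ^ (m + 1)) := by
  classical
  induction s using Finset.induction_on with
  | empty =>
    have : (PowerSeries.mk (fun _ => (0 : ℂ))) = 0 := by ext; simp
    simp [this]
  | insert a s ha ih =>
    have h1 : (PowerSeries.mk (fun m => -∑ i ∈ insert a s, (-α i) ^ (m + 1)))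
        = PowerSeries.mk (fun m => -(-α a) ^ (m + 1)) +
          PowerSeries.mk (fun m => -∑ i ∈ s, (-α i) ^ (m + 1)) := by
      ext m
      simp [Finset.sum_insert ha]
      ring
    have h2 : (1 + PowerSeries.C (α a) * PowerSeries.X) *
        PowerSeries.mk (fun m => -(-α a) ^ (m + 1)) = PowerSeries.C (α a) := by
      ext m
      rw [add_mul, one_mul, mul_assoc, map_add, PowerSeries.coeff_C_mul]
      cases m with
      | zero => simp
      | succ m =>
        rw [PowerSeries.coeff_succ_X_mul]
        simp
        ring
    rw [Finset.prod_insert ha, h1, Polynomial.coe_mul, Derivation.leibniz, ih]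
    simp only [Polynomial.coe_add, Polynomial.coe_mul, Polynomial.coe_C, Polynomial.coe_X,
      Polynomial.coe_one, smul_eq_mul] at *
    have h3 : PowerSeries.derivative ℂ (1 + PowerSeries.C (α a) * PowerSeries.X)
        = PowerSeries.C (α a) := by
      simp [Derivation.leibniz]
    rw [h3]
    linear_combination (-(((∏ i ∈ s, (1 + C (α i) * X) : ℂ[X]) : PowerSeries ℂ))) * h2

/-- The key divisibility. -/
theorem aux_div (p : ℕ) (hodd : Odd p) (n : ℕ) (hn : n < p)
    (G u : PowerSeries ℤ) (hG : ∀ k, n < k → PowerSeries.coeff k G = 0)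
    (hu : PowerSeries.derivative ℤ (1 + PowerSeries.C (p : ℤ) * G)
      = (1 + PowerSeries.C (p : ℤ) * G) * u) (j m : ℕ) (hm : m + 1 = p * (j + 1)) :
    (p : ℤ) ^ 3 ∣ PowerSeries.coeff m u := by
  set G' := PowerSeries.derivative ℤ G with hG'
  have h1 : PowerSeries.derivative ℤ (1 + PowerSeries.C (p : ℤ) * G)
      = PowerSeries.C (p : ℤ) * G' := by
    simp [Derivation.leibniz, hG']
  rw [h1] at hu
  have h2 : PowerSeries.C (2 : ℤ) * u = PowerSeries.C ((2 * p : ℕ) : ℤ) * G'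
      - PowerSeries.C ((p : ℤ) ^ 2) * PowerSeries.derivative ℤ (G * G)
      + PowerSeries.C ((p : ℤ) ^ 3) * (PowerSeries.C 2 * (G * G * (G' - G * u))) := by
    rw [Derivation.leibniz, ← hG']
    simp only [smul_eq_mul]
    push_cast
    simp only [map_mul, map_pow]
    have h22 : PowerSeries.C (2 : ℤ) = 2 := by simp
    rw [h22]
    set P := PowerSeries.C (p : ℤ)
    linear_combination (-2 + 2 * P * G - 2 * P ^ 2 * G ^ 2) * hu
  have h3 := congrArg (PowerSeries.coeff m) h2
  have h4 : PowerSeries.coeff m G' = 0 := by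
    rw [hG', PowerSeries.coeff_derivative, hG, zero_mul]
    rw [hm]; nlinarith
  have h5 : PowerSeries.coeff m (PowerSeries.derivative ℤ (G * G))
      = PowerSeries.coeff (m + 1) (G * G) * (p * (j + 1)) := by
    rw [PowerSeries.coeff_derivative]
    congr 1
    exact_mod_cast hm
  rw [map_add, map_sub, PowerSeries.coeff_C_mul, PowerSeries.coeff_C_mul,
    PowerSeries.coeff_C_mul, PowerSeries.coeff_C_mul, h4, h5] at h3
  have hc : IsCoprime ((p : ℤ) ^ 3) 2 := by
    apply IsCoprime.pow_left
    rw [Int.isCoprime_iff_gcd_eq_one]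
    exact_mod_cast (Nat.coprime_two_right.mpr hodd)
  apply hc.dvd_of_dvd_mul_left
  rw [h3]
  refine dvd_add ?_ (dvd_mul_right _ _)
  refine ⟨-(PowerSeries.coeff (m + 1) (G * G) * (j + 1)), by ring⟩

theorem aux_deg {ι : Type*} (s : Finset ι) (α : ι → ℂ) :
    (∏ i ∈ s, (1 + C (α i) * X) : ℂ[X]).natDegree ≤ s.card := by
  refine (Polynomial.natDegree_prod_le _ _).trans ?_
  refine (Finset.sum_le_card_nsmul _ _ 1 ?_).trans (by simp)
  intro i _
  compute_degree

theorem aux_integral (f : ℤ[X]) (h0 : f.coeff 0 = 1) (a : ℂ)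
    (ha : f.eval₂ (Int.castRingHom ℂ) (-a⁻¹) = 0) : IsIntegral ℤ a := by
  by_cases h : a = 0
  · rw [h]; exact isIntegral_zero
  have hx : -a⁻¹ ≠ 0 := by simpa using h
  let _ := invertibleOfNonzero hx
  have h1 := (Polynomial.eval₂_reverse_eq_zero_iff (Int.castRingHom ℂ) (-a⁻¹) f).mpr ha
  have h2 : ⅟(-a⁻¹) = -a := by
    rw [invOf_eq_inv, inv_neg, inv_inv]
  rw [h2] at h1
  have h3 : IsIntegral ℤ (-a) := by
    refine ⟨f.reverse, ?_, h1⟩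
    rw [Polynomial.Monic, Polynomial.reverse_leadingCoeff,
      Polynomial.trailingCoeff_eq_coeff_zero, h0]
    rw [h0]; exact one_ne_zero
  simpa using h3.neg

theorem aux_coeff_integral {ι : Type*} (s : Finset ι) (b : ι → ℂ)
    (hb : ∀ i, IsIntegral ℤ (b i)) (k : ℕ) :
    IsIntegral ℤ ((∏ i ∈ s, (1 + C (b i) * X) : ℂ[X]).coeff k) := by
  let b' : ι → integralClosure ℤ ℂ := fun i => ⟨b i, hb i⟩
  have : (∏ i ∈ s, (1 + C (b i) * X) : ℂ[X])
      = (∏ i ∈ s, (1 + C (b' i) * X)).map (algebraMap (integralClosure ℤ ℂ) ℂ) := by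
    rw [Polynomial.map_prod]
    refine Finset.prod_congr rfl fun i _ => ?_
    simp only [Polynomial.map_add, Polynomial.map_one, Polynomial.map_mul, Polynomial.map_C,
      Polynomial.map_X]
    rfl
  rw [this, Polynomial.coeff_map]
  exact ((∏ i ∈ s, (1 + C (b' i) * X)).coeff k).2

/-- Let `p` be an odd prime and `n < p`.  If `Π_{i=1}^n (1 + α_i x)` has
integer coefficients `e_i` (for `i = 1,…,n`) all divisible by `p`, then
`Π_{i=1}^n (1 + α_i^p x)` has integer coefficients all divisible by `p³`. -/
theorem stmt13 (p : ℕ) (hp : p.Prime) (hodd : Odd p) (n : ℕ) (hn : n < p)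
    (α : Fin n → ℂ)
    (h : ∀ k : ℕ, 1 ≤ k → k ≤ n → ∃ c : ℤ,
        (∏ i : Fin n, (1 + C (α i) * X)).coeff k = (c : ℂ) ∧ (p : ℤ) ∣ c) :
    ∀ k : ℕ, 1 ≤ k → k ≤ n → ∃ c : ℤ,
        (∏ i : Fin n, (1 + C (α i ^ p) * X)).coeff k = (c : ℂ) ∧
        (p : ℤ) ^ 3 ∣ c := by
  have h' : ∀ k : ℕ, ∃ d : ℤ, 1 ≤ k → k ≤ n →
      (∏ i : Fin n, (1 + C (α i) * X)).coeff k = ((p * d : ℤ) : ℂ) := by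
    intro k
    by_cases hk : 1 ≤ k ∧ k ≤ n
    · obtain ⟨c, hc, d, rfl⟩ := h k hk.1 hk.2
      exact ⟨d, fun _ _ => hc⟩
    · exact ⟨0, fun h1 h2 => absurd ⟨h1, h2⟩ hk⟩
  choose d hd using h'
  have hcoeff0 : ∀ b : Fin n → ℂ, (∏ i : Fin n, (1 + C (b i) * X)).coeff 0 = 1 := by
    intro b
    rw [Polynomial.coeff_zero_prod]
    simp
  set g : ℤ[X] := ∑ k ∈ Finset.Icc 1 n, monomial k (d k) with hg
  have hgc : ∀ k, g.coeff k = if 1 ≤ k ∧ k ≤ n then d k else 0 := by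
    intro k
    simp [hg, Polynomial.finsetSum_coeff, Polynomial.coeff_monomial]
  set f : ℤ[X] := 1 + C (p : ℤ) * g with hf
  have hf0 : f.coeff 0 = 1 := by
    simp [hf, hgc]
  have hmap : f.map (Int.castRingHom ℂ) = ∏ i : Fin n, (1 + C (α i) * X) := by
    ext k
    rw [Polynomial.coeff_map]
    rcases Nat.eq_zero_or_pos k with rfl | hk
    · rw [hf0, hcoeff0]; simp
    · have hfk : f.coeff k = p * g.coeff k := by
        simp [hf, Polynomial.coeff_one, hk.ne']
      rw [hfk, hgc]
      by_cases hkn : k ≤ n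
      · rw [if_pos ⟨hk, hkn⟩, hd k hk hkn]; simp
      · rw [if_neg (by tauto), Polynomial.coeff_eq_zero_of_natDegree_lt]
        · simp
        · refine (aux_deg _ _).trans_lt ?_
          simpa using hkn
  have hIntegral : ∀ i, IsIntegral ℤ (α i) := by
    intro i
    by_cases hi : α i = 0
    · rw [hi]; exact isIntegral_zero
    apply aux_integral f hf0
    rw [← Polynomial.eval_map, hmap, Polynomial.eval_prod]
    apply Finset.prod_eq_zero (Finset.mem_univ i)
    simp [hi]
  -- the logarithmic derivative over the integers
  obtain ⟨v, hv⟩ : ∃ v : PowerSeries ℤ, (f : PowerSeries ℤ) * v = 1 :=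
    ⟨_, PowerSeries.mul_invOfUnit (f : PowerSeries ℤ) 1 (by simp [hf0])⟩
  set u := v * PowerSeries.derivative ℤ (f : PowerSeries ℤ) with hudef
  have hu : PowerSeries.derivative ℤ (f : PowerSeries ℤ) = (f : PowerSeries ℤ) * u := by
    rw [hudef, ← mul_assoc, hv, one_mul]
  have hfp : (f : PowerSeries ℤ) = 1 + PowerSeries.C (p : ℤ) * (g : PowerSeries ℤ) := by
    rw [hf, Polynomial.coe_add, Polynomial.coe_mul, Polynomial.coe_C, Polynomial.coe_one]
  have hdiv : ∀ j m : ℕ, m + 1 = p * (j + 1) → (p : ℤ) ^ 3 ∣ PowerSeries.coeff m u := by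
    intro j m hm
    refine aux_div p hodd n hn g u ?_ (hfp ▸ hu) j m hm
    intro k hk
    rw [Polynomial.coeff_coe, hgc, if_neg (by omega)]
  have hmapf : PowerSeries.map (Int.castRingHom ℂ) (f : PowerSeries ℤ)
      = ((∏ i : Fin n, (1 + C (α i) * X) : ℂ[X]) : PowerSeries ℂ) := by
    rw [← hmap]
    ext k
    simp
  have hul : PowerSeries.map (Int.castRingHom ℂ) u
      = PowerSeries.mk (fun m => -∑ i, (-α i) ^ (m + 1)) := by
    have h1 := aux_logder Finset.univ α
    rw [← hmapf] at h1
    have h2 : PowerSeries.derivative ℂ (PowerSeries.map (Int.castRingHom ℂ) (f : PowerSeries ℤ))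
        = PowerSeries.map (Int.castRingHom ℂ) (PowerSeries.derivative ℤ (f : PowerSeries ℤ)) := by
      ext k
      simp [PowerSeries.coeff_derivative]
    rw [h2, hu, map_mul] at h1
    refine mul_left_cancel₀ ?_ h1
    intro h0
    have := congrArg (PowerSeries.coeff 0) h0
    simp [hf0] at this
  have hL : ∀ j : ℕ, ∃ c : ℤ, -∑ i, (-(α i ^ p)) ^ (j + 1) = (((p : ℤ) ^ 3 * c : ℤ) : ℂ) := by
    intro j
    have hpos : 0 < p * (j + 1) := Nat.mul_pos hp.pos (Nat.succ_pos j)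
    obtain ⟨c, hc⟩ := hdiv j (p * (j + 1) - 1) (by omega)
    refine ⟨c, ?_⟩
    rw [← hc]
    have := congrArg (PowerSeries.coeff (p * (j + 1) - 1)) hul
    rw [PowerSeries.coeff_map, PowerSeries.coeff_mk] at this
    rw [eq_intCast] at this
    rw [this, Nat.sub_add_cancel hpos]
    congr 1
    refine Finset.sum_congr rfl fun i _ => ?_
    rw [pow_mul, hodd.neg_pow]
  choose l hl using hL
  have hH := aux_logder Finset.univ (fun i => α i ^ p)
  set H : ℂ[X] := ∏ i : Fin n, (1 + C (α i ^ p) * X) with hHdef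
  have hHint : ∀ k, IsIntegral ℤ (H.coeff k) := fun k =>
    aux_coeff_integral _ _ (fun i => (hIntegral i).pow p) k
  have key : ∀ k : ℕ, k ≤ n → ∃ c : ℤ, H.coeff k = (c : ℂ) ∧ (1 ≤ k → (p : ℤ) ^ 3 ∣ c) := by
    intro k
    induction k using Nat.strong_induction_on with
    | _ k ih =>
      intro hk
      cases k with
      | zero => exact ⟨1, by rw [hcoeff0]; simp, by simp⟩
      | succ k =>
        have h1 := congrArg (PowerSeries.coeff k) hH
        rw [PowerSeries.coeff_derivative, PowerSeries.coeff_mul] at h1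
        simp only [Polynomial.coeff_coe, PowerSeries.coeff_mk, hl] at h1
        have h2 : ∃ e : ℤ, H.coeff (k + 1) * ((k : ℂ) + 1) = (((p : ℤ) ^ 3 * e : ℤ) : ℂ) := by
          have h3 : ∀ x : ℕ, ∃ c : ℤ, x ≤ k → H.coeff x = (c : ℂ) := by
            intro x
            by_cases hx : x ≤ k
            · obtain ⟨c, hc, _⟩ := ih x (by omega) (by omega)
              exact ⟨c, fun _ => hc⟩
            · exact ⟨0, fun h => absurd h hx⟩
          choose c hc using h3
          refine ⟨∑ x ∈ Finset.HasAntidiagonal.antidiagonal k, c x.1 * l x.2, ?_⟩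
          rw [h1, Finset.mul_sum]
          push_cast
          refine Finset.sum_congr rfl fun x hx => ?_
          rw [hc x.1 (by have := Finset.HasAntidiagonal.mem_antidiagonal.mp hx; omega)]
          ring
        obtain ⟨e, he⟩ := h2
        have hk0 : ((k : ℂ) + 1) ≠ 0 := by exact_mod_cast Nat.succ_ne_zero k
        obtain ⟨c, hc⟩ : ∃ c : ℤ, H.coeff (k + 1) = (c : ℂ) := by
          have hq : H.coeff (k + 1)
              = algebraMap ℚ ℂ (((p : ℚ) ^ 3 * e) / ((k : ℚ) + 1)) := by
            rw [eq_div_of_mul_eq hk0 he]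
            push_cast
            simp
          have hi := hHint (k + 1)
          rw [hq] at hi
          have hi2 := (isIntegral_algebraMap_iff (algebraMap ℚ ℂ).injective).mp hi
          obtain ⟨c, hc⟩ := IsIntegrallyClosed.isIntegral_iff.mp hi2
          refine ⟨c, ?_⟩
          rw [hq, ← hc]
          simp
        refine ⟨c, hc, fun _ => ?_⟩
        rw [hc] at he
        have he' : c * ((k : ℤ) + 1) = (p : ℤ) ^ 3 * e := by exact_mod_cast he
        have hcop : IsCoprime ((p : ℤ) ^ 3) ((k : ℤ) + 1) := by
          apply IsCoprime.pow_left
          have : Nat.Coprime p (k + 1) :=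
            (Nat.coprime_of_lt_prime (Nat.succ_ne_zero k) (by omega) hp)
          exact_mod_cast Nat.isCoprime_iff_coprime.mpr this
        exact hcop.dvd_of_dvd_mul_right ⟨e, he'⟩
  intro k hk1 hk
  obtain ⟨c, hc, hc'⟩ := key k hk
  exact ⟨c, hc, hc' hk1⟩
end
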